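/- Let d ≥ 1, let N ≥ 2, let x_1, …, x_N be pairwise distinct points in ℝ^d, and let π_1, …, π_N be weights with π_j > 0 for all j and ∑_{j=1}^N π_j = 1. Let σ ∈ (0, ∞)^N and fix an index j. Define the weighted responsibilities w_{ij} = π_j · K_{σ_j}(x_i, x_j) / ∑_{k ≠ i} π_k · K_{σ_k}(x_i, x_k) for i ≠ j, and the gradient g_j = ∑_{i ≠ j} ( ‖x_i − x_j‖² / σ_j³ − d / σ_j ) · w_{ij}. If g_j ≤ 0, then σ_j² ≥ (1/d) · min_{i ≠ j} ‖x_i − x_j‖². In particular, data-copying cannot occur at any optimal solution of the LOO-MLL objective for π-KDE when the data points are distinct. -/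

import Mathlib

/-- The isotropic Gaussian kernel on `ℝ^d` with center `μ` and bandwidth `σ`:
`K_σ(x, μ) = (2πσ²)^{-d/2} · exp(−‖x − μ‖² / (2σ²))`. -/
noncomputable def gaussKernel (d : ℕ) (σ : ℝ) (x μ : EuclideanSpace ℝ (Fin d)) : ℝ :=
  (2 * Real.pi * σ ^ 2) ^ (-(d : ℝ) / 2) * Real.exp (-‖x - μ‖ ^ 2 / (2 * σ ^ 2))

/-! The responsibilities are positive, so a nonpositive gradient forces some coefficient
`‖x_i − x_j‖² / σ_j³ − d / σ_j` to be nonpositive, and such a coefficient says exactly that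
`‖x_i − x_j‖² ≤ d σ_j²`. -/

theorem gaussKernel_nonneg (d : ℕ) (σ : ℝ) (x μ : EuclideanSpace ℝ (Fin d)) :
    0 ≤ gaussKernel d σ x μ := by
  unfold gaussKernel
  positivity

theorem gaussKernel_pos {d : ℕ} {σ : ℝ} (hσ : σ ≠ 0) (x μ : EuclideanSpace ℝ (Fin d)) :
    0 < gaussKernel d σ x μ := by
  unfold gaussKernel
  positivity

theorem div_pow_three_sub_div_nonpos_iff {K : Type*} [Field K] [LinearOrder K]
    [IsStrictOrderedRing K] {r c s : K} (hs : 0 < s) :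
    r / s ^ 3 - c / s ≤ 0 ↔ r ≤ c * s ^ 2 := by
  have common_denominator : r / s ^ 3 - c / s = (r - c * s ^ 2) / s ^ 3 := by
    field_simp
  rw [common_denominator, div_le_iff₀ (pow_pos hs 3), zero_mul, sub_nonpos]

section LeaveOneOut

variable {ι : Type*} [Fintype ι] [DecidableEq ι] {d : ℕ}

/-- The responsibility `w_{ij}` of the kernel centred at `x j` for the point `x i` in the
leave-one-out mixture at `x i`, which omits the kernel centred at `x i` itself. -/
noncomputable def looResponsibility (x : ι → EuclideanSpace ℝ (Fin d)) (w σ : ι → ℝ)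
    (i j : ι) : ℝ :=
  w j * gaussKernel d (σ j) (x i) (x j) /
    ∑ k ∈ Finset.univ.erase i, w k * gaussKernel d (σ k) (x i) (x k)

/-- The partial derivative `g_j` of the leave-one-out log-likelihood with respect to the bandwidth
`σ j`, given by its closed formula. -/
noncomputable def looGradient (x : ι → EuclideanSpace ℝ (Fin d)) (w σ : ι → ℝ) (j : ι) : ℝ :=
  ∑ i ∈ Finset.univ.erase j,
    (‖x i - x j‖ ^ 2 / (σ j) ^ 3 - (d : ℝ) / σ j) * looResponsibility x w σ i j

variable {x : ι → EuclideanSpace ℝ (Fin d)} {w σ : ι → ℝ} {i j : ι}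

theorem looResponsibility_pos (hw : ∀ k, 0 ≤ w k) (hwj : 0 < w j) (hσj : σ j ≠ 0) (hij : i ≠ j) :
    0 < looResponsibility x w σ i j := by
  have component_pos : 0 < w j * gaussKernel d (σ j) (x i) (x j) :=
    mul_pos hwj (gaussKernel_pos hσj _ _)
  have mixture_pos : 0 < ∑ k ∈ Finset.univ.erase i, w k * gaussKernel d (σ k) (x i) (x k) :=
    Finset.sum_pos' (fun k _ => mul_nonneg (hw k) (gaussKernel_nonneg _ _ _ _))
      ⟨j, Finset.mem_erase.mpr ⟨hij.symm, Finset.mem_univ j⟩, component_pos⟩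
  exact div_pos component_pos mixture_pos

theorem exists_ne_sq_norm_sub_le_of_looGradient_nonpos [Nontrivial ι] (hw : ∀ k, 0 ≤ w k)
    (hwj : 0 < w j) (hσj : 0 < σ j) (hg : looGradient x w σ j ≤ 0) :
    ∃ i, i ≠ j ∧ ‖x i - x j‖ ^ 2 ≤ d * σ j ^ 2 := by
  obtain ⟨i, hi, term_nonpos⟩ : ∃ i ∈ Finset.univ.erase j,
      (‖x i - x j‖ ^ 2 / (σ j) ^ 3 - (d : ℝ) / σ j) * looResponsibility x w σ i j ≤ 0 :=
    Finset.exists_le_of_sum_le Finset.univ_nontrivial.erase_nonempty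
      (hg.trans_eq Finset.sum_const_zero.symm)
  have hij : i ≠ j := Finset.ne_of_mem_erase hi
  have coefficient_nonpos : ‖x i - x j‖ ^ 2 / (σ j) ^ 3 - (d : ℝ) / σ j ≤ 0 :=
    nonpos_of_mul_nonpos_left term_nonpos (looResponsibility_pos hw hwj hσj.ne' hij)
  exact ⟨i, hij, (div_pow_three_sub_div_nonpos_iff hσj).mp coefficient_nonpos⟩

theorem pikde_loo_bandwidth_lower_bound_of_grad_nonpos_general (hd : 0 < d)
    (hw : ∀ k, 0 ≤ w k) (hwj : 0 < w j) (hσj : 0 < σ j) {m2 : ℝ}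
    (hm2 : IsLeast {r : ℝ | ∃ i, i ≠ j ∧ r = ‖x i - x j‖ ^ 2} m2)
    (hg : looGradient x w σ j ≤ 0) :
    (1 / (d : ℝ)) * m2 ≤ (σ j) ^ 2 := by
  obtain ⟨⟨i₀, hi₀, -⟩, m2_le⟩ := hm2
  have : Nontrivial ι := ⟨i₀, j, hi₀⟩
  obtain ⟨i, hij, sq_norm_le⟩ := exists_ne_sq_norm_sub_le_of_looGradient_nonpos hw hwj hσj hg
  rw [one_div, inv_mul_le_iff₀ (Nat.cast_pos.mpr hd)]
  exact (m2_le ⟨i, hij, rfl⟩).trans sq_norm_le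

end LeaveOneOut

/-- If the first-order optimality condition `g_j ≤ 0` holds for the LOO-MLL objective for
π-KDE, where `g_j = ∑_{i ≠ j} (‖x_i − x_j‖²/σ_j³ − d/σ_j) · w_{ij}` with weighted
responsibilities `w_{ij} = π_j K_{σ_j}(x_i, x_j) / ∑_{k ≠ i} π_k K_{σ_k}(x_i, x_k)`, then
`σ_j² ≥ (1/d) · min_{i ≠ j} ‖x_i − x_j‖²`; in particular data-copying cannot occur at any
optimal solution of the LOO-MLL objective for π-KDE. -/
theorem pikde_loo_bandwidth_lower_bound_of_grad_nonpos
    (d N : ℕ) (hd : 1 ≤ d) (hN : 2 ≤ N)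
    (x : Fin N → EuclideanSpace ℝ (Fin d)) (hx : Function.Injective x)
    (w : Fin N → ℝ) (hw : ∀ j, 0 < w j) (hwsum : ∑ j, w j = 1)
    (σ : Fin N → ℝ) (hσ : ∀ k, 0 < σ k) (j : Fin N)
    (m2 : ℝ) (hm2 : IsLeast {r : ℝ | ∃ i : Fin N, i ≠ j ∧ r = ‖x i - x j‖ ^ 2} m2)
    (hg : ∑ i ∈ Finset.univ.erase j,
        (‖x i - x j‖ ^ 2 / (σ j) ^ 3 - (d : ℝ) / σ j) *
          (w j * gaussKernel d (σ j) (x i) (x j) /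
            ∑ k ∈ Finset.univ.erase i, w k * gaussKernel d (σ k) (x i) (x k)) ≤ 0) :
    (1 / (d : ℝ)) * m2 ≤ (σ j) ^ 2 :=
  pikde_loo_bandwidth_lower_bound_of_grad_nonpos_general hd (fun k => (hw k).le) (hw j) (hσ j)
    hm2 hg
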